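/- arXiv:math/0407064 — 2 statements merged into one kernel-verified Lean document; each statement's English description precedes it below -/
import Mathlib

section
/- Let g ∈ ℂ[x₁,…,x_{n+1}] be quasi-homogeneous of degree d for the weights α = (α₁,…,α_{n+1}), with the origin as its only singularity. Then every monomial x^β whose class in the Milnor algebra V_g is nonzero (equivalently, x^β does not lie in the Jacobian ideal ⟨∂g/∂x₁,…,∂g/∂x_{n+1}⟩) satisfies Σᵢ (βᵢ+1)αᵢ ≤ (n+1)·d − Σᵢ αᵢ; in particular A_β := Σᵢ (βᵢ+1)αᵢ/d satisfies 0 < A_β < n + 1. -/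
open MvPolynomial

/-!
Let `f₁, …, fₙ` be the partial derivatives of `g`. By the Nullstellensatz some powers of the
variables lie in the Jacobian ideal, say `Xᵢ ^ Kᵢ = ∑ⱼ Cᵢⱼ fⱼ`, where `Cᵢⱼ` may be taken
weighted homogeneous of degree `Kᵢ αᵢ - deg fⱼ`. Wiebe's theorem says that `u ∈ (f₁, …, fₙ)` as
soon as `u det C ∈ (X₁ ^ K₁, …, Xₙ ^ Kₙ)`. If `u` is homogeneous of degree greater than
`∑ deg fⱼ - ∑ αᵢ`, then `u det C` has degree greater than `∑ (Kᵢ - 1) αᵢ`, so every monomial in it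
is divisible by some `Xᵢ ^ Kᵢ`.

Wiebe's theorem only uses that `aᵢ = ∑ⱼ Cᵢⱼ fⱼ` is a regular sequence. In the Koszul complex of
`f`, let `vₖ = u c₁ ∧ ⋯ ∧ cₖ`, where `cᵢ` is the `i`-th row of `C`, so that `vₙ` is `u det C` times
the top form. Contracting `vₖ ∧ cₖ₊₁` with `f` gives `aₖ₊₁ vₖ` modulo `(a₁, …, aₖ)`, so regularity
allows one to descend from `vₙ ≡ 0` to: each `vₖ` is a boundary modulo `(a₁, …, aₖ)`. For `k = 0`
this is `u ∈ (f₁, …, fₙ)`.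
-/

section Koszul

open CliffordAlgebra RingTheory.Sequence

open scoped Pointwise

open ExteriorAlgebra (algebraMapInv)

variable {R M : Type*} [CommRing R] [AddCommGroup M] [Module R M]

/-- The differential of the Koszul complex of a linear form `d` on `M`, as an endomorphism of the
whole exterior algebra. It contracts on the right, so that a product `c₁ ∧ ⋯ ∧ cₖ` can be
analysed by peeling off its last factor. -/
def koszulDifferential (d : Module.Dual R M) : ExteriorAlgebra R M →ₗ[R] ExteriorAlgebra R M :=
  contractRight.flip d

variable (d : Module.Dual R M)

lemma koszulDifferential_one : koszulDifferential d 1 = 0 :=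
  contractRight_one 0 d

lemma koszulDifferential_mul_ι (x : ExteriorAlgebra R M) (m : M) :
    koszulDifferential d (x * ExteriorAlgebra.ι R m) =
      d m • x - koszulDifferential d x * ExteriorAlgebra.ι R m :=
  contractRight_mul_ι (d := d) m x

lemma koszulDifferential_koszulDifferential (x : ExteriorAlgebra R M) :
    koszulDifferential d (koszulDifferential d x) = 0 :=
  contractRight_contractRight (d := d) x

lemma algebraMapInv_koszulDifferential_mem_range (x : ExteriorAlgebra R M) :
    algebraMapInv (koszulDifferential d x) ∈ LinearMap.range d := by
  induction x using CliffordAlgebra.right_induction with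
  | algebraMap r =>
    simp [Algebra.algebraMap_eq_smul_one, koszulDifferential_one]
  | add x y hx hy => simpa only [map_add] using add_mem hx hy
  | mul_ι m x _ =>
    refine ⟨algebraMapInv x • m, ?_⟩
    rw [koszulDifferential_mul_ι]
    simp [mul_comm, algebraMapInv]

lemma koszulDifferential_mem_smul_top (J : Ideal R) {x : ExteriorAlgebra R M}
    (hx : x ∈ J • (⊤ : Submodule R (ExteriorAlgebra R M))) :
    koszulDifferential d x ∈ J • (⊤ : Submodule R (ExteriorAlgebra R M)) :=
  Submodule.smul_top_le_comap_smul_top J (koszulDifferential d) hx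

lemma mul_mem_smul_top (J : Ideal R) {x : ExteriorAlgebra R M} (y : ExteriorAlgebra R M)
    (hx : x ∈ J • (⊤ : Submodule R (ExteriorAlgebra R M))) :
    x * y ∈ J • (⊤ : Submodule R (ExteriorAlgebra R M)) :=
  Submodule.smul_top_le_comap_smul_top J (LinearMap.mulRight R y) hx

lemma ofList_append_singleton_smul_top (rs : List R) (r : R) :
    Ideal.ofList (rs ++ [r]) • (⊤ : Submodule R M) =
      Ideal.ofList rs • (⊤ : Submodule R M) ⊔ r • (⊤ : Submodule R M) := by
  rw [Ideal.ofList_append, Ideal.ofList_singleton, Submodule.sup_smul,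
    Submodule.ideal_span_singleton_smul]

lemma koszulDifferential_prod_ι_mem (l : List M) :
    koszulDifferential d (l.map (ExteriorAlgebra.ι R)).prod ∈
      Ideal.ofList (l.map d) • (⊤ : Submodule R (ExteriorAlgebra R M)) := by
  induction l using List.reverseRecOn with
  | nil => simp [koszulDifferential_one]
  | append_singleton l m ih =>
    simp only [List.map_append, List.map_singleton, List.prod_append, List.prod_singleton]
    rw [koszulDifferential_mul_ι, ofList_append_singleton_smul_top]
    exact sub_mem
      (Submodule.mem_sup_right <| Submodule.smul_mem_pointwise_smul _ _ _ Submodule.mem_top)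
      (Submodule.mem_sup_left <| mul_mem_smul_top _ _ ih)

lemma mem_sup_range_koszulDifferential_of_mul_ι_mem {J : Ideal R} {m : M}
    (hreg : IsSMulRegular
      (ExteriorAlgebra R M ⧸ J • (⊤ : Submodule R (ExteriorAlgebra R M))) (d m))
    {x : ExteriorAlgebra R M}
    (hx : koszulDifferential d x ∈ J • (⊤ : Submodule R (ExteriorAlgebra R M)))
    (hxm : x * ExteriorAlgebra.ι R m ∈
      J • (⊤ : Submodule R (ExteriorAlgebra R M)) ⊔ d m • (⊤ : Submodule R (ExteriorAlgebra R M)) ⊔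
        LinearMap.range (koszulDifferential d)) :
    x ∈ J • (⊤ : Submodule R (ExteriorAlgebra R M)) ⊔ LinearMap.range (koszulDifferential d) := by
  obtain ⟨_, h, _, ⟨z, rfl⟩, hsum⟩ := Submodule.mem_sup.mp hxm
  obtain ⟨b, hb, _, ⟨y, -, rfl⟩, rfl⟩ := Submodule.mem_sup.mp h
  replace hsum := congrArg (koszulDifferential d) hsum
  simp only [DistribSMul.toLinearMap_apply, map_add, map_smul, koszulDifferential_mul_ι,
    koszulDifferential_koszulDifferential, add_zero] at hsum
  have hdiff : d m • (x - koszulDifferential d y) =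
      koszulDifferential d b + koszulDifferential d x * ExteriorAlgebra.ι R m := by
    rw [smul_sub, ← sub_eq_zero, ← sub_eq_zero.mpr hsum.symm]
    abel
  have hmem : x - koszulDifferential d y ∈ J • (⊤ : Submodule R (ExteriorAlgebra R M)) := by
    refine mem_of_isSMulRegular_quotient_of_smul_mem hreg ?_
    rw [hdiff]
    exact add_mem (koszulDifferential_mem_smul_top d J hb) (mul_mem_smul_top J _ hx)
  exact Submodule.mem_sup.mpr ⟨_, hmem, _, ⟨y, rfl⟩, sub_add_cancel _ _⟩

lemma mem_range_of_smul_prod_ι_mem (u : R) (l : List M)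
    (hreg : IsWeaklyRegular (ExteriorAlgebra R M) (l.map d))
    (hu : u • (l.map (ExteriorAlgebra.ι R)).prod ∈
      Ideal.ofList (l.map d) • (⊤ : Submodule R (ExteriorAlgebra R M)) ⊔
        LinearMap.range (koszulDifferential d)) :
    u ∈ LinearMap.range d := by
  induction l using List.reverseRecOn with
  | nil =>
    obtain ⟨y, hy⟩ : u • 1 ∈ LinearMap.range (koszulDifferential d) := by simpa using hu
    simpa [hy] using algebraMapInv_koszulDifferential_mem_range d y
  | append_singleton l m ih =>
    simp only [List.map_append, List.map_singleton, List.prod_append, List.prod_singleton]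
      at hreg hu
    rw [isWeaklyRegular_append_iff, isWeaklyRegular_singleton_iff] at hreg
    rw [ofList_append_singleton_smul_top, ← smul_mul_assoc] at hu
    refine ih hreg.1 (mem_sup_range_koszulDifferential_of_mul_ι_mem d hreg.2 ?_ hu)
    rw [map_smul]
    exact Submodule.smul_mem _ u (koszulDifferential_prod_ι_mem d l)

lemma alternatingMap_apply_eq_basis_det_smul {ι N : Type*} [Fintype ι] [DecidableEq ι]
    [AddCommGroup N] [Module R N] (e : Module.Basis ι R M) (φ : M [⋀^ι]→ₗ[R] N) (v : ι → M) :
    φ v = e.det v • φ e := by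
  have hφ : φ = (LinearMap.toSpanSingleton R N (φ e)).compAlternatingMap e.det := by
    refine e.ext_alternating fun i hi => ?_
    let τ : Equiv.Perm ι := .ofBijective i (Finite.injective_iff_bijective.mp hi)
    change φ (e ∘ τ) = e.det (e ∘ τ) • φ e
    simp [AlternatingMap.map_perm, e.det_self]
  exact congrArg (· v) hφ

theorem mem_span_of_mul_det_mem_ofList {n : ℕ} (C : Matrix (Fin n) (Fin n) R) (f : Fin n → R)
    (hreg : IsWeaklyRegular R (List.ofFn (C.mulVec f))) {u : R}
    (hu : u * C.det ∈ Ideal.ofList (List.ofFn (C.mulVec f))) :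
    u ∈ Ideal.span (Set.range f) := by
  let d : Module.Dual R (Fin n → R) := Fintype.linearCombination R f
  have hd : (List.ofFn C.row).map d = List.ofFn (C.mulVec f) := by
    rw [List.map_ofFn]
    rfl
  have : Module.Free R (ExteriorAlgebra R (Fin n → R)) :=
    .of_basis (Pi.basisFun R (Fin n)).ExteriorAlgebra
  rw [Ideal.span, ← Fintype.range_linearCombination]
  refine mem_range_of_smul_prod_ι_mem d u (List.ofFn C.row) ?_ (Submodule.mem_sup_left ?_)
  · rw [hd]
    exact ((TensorProduct.rid R _).isWeaklyRegular_congr _).mp hreg.isWeaklyRegular_lTensor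
  · rw [hd, List.map_ofFn]
    change u • (List.ofFn fun i => ExteriorAlgebra.ι R (C.row i)).prod ∈ _
    rw [← ExteriorAlgebra.ιMulti_apply,
      alternatingMap_apply_eq_basis_det_smul (Pi.basisFun R (Fin n)), Pi.basisFun_det_apply,
      smul_smul]
    exact Submodule.smul_mem_smul hu Submodule.mem_top

end Koszul

section Monomials

open RingTheory.Sequence

variable {σ R : Type*}

lemma mem_span_X_pow_image_iff [CommSemiring R] {K : σ → ℕ} {I : Set σ} {p : MvPolynomial σ R} :
    p ∈ Ideal.span ((fun i => (X i ^ K i : MvPolynomial σ R)) '' I) ↔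
      ∀ s ∈ p.support, ∃ i ∈ I, K i ≤ s i := by
  have himage : (fun i => (X i ^ K i : MvPolynomial σ R)) '' I =
      (fun s => monomial s (1 : R)) '' ((fun i => Finsupp.single i (K i)) '' I) := by
    simp only [X_pow_eq_monomial, Set.image_image]
  simp only [himage, mem_ideal_span_monomial_image, Set.exists_mem_image, Finsupp.single_le_iff]

lemma ofList_map_eq_span_image [CommSemiring R] {ι : Type*} (a : ι → R) (l : List ι) :
    Ideal.ofList (l.map a) = Ideal.span (a '' {i | i ∈ l}) := by
  simp [Ideal.ofList, Set.image]

lemma isWeaklyRegular_map_X_pow [CommRing R] (K : σ → ℕ) {l : List σ} (hl : l.Nodup) :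
    IsWeaklyRegular (MvPolynomial σ R) (l.map fun i => (X i ^ K i : MvPolynomial σ R)) := by
  induction l using List.reverseRecOn with
  | nil => simp
  | append_singleton l m ih =>
    obtain ⟨hl, -, hm⟩ := List.nodup_append.mp hl
    rw [List.map_append, List.map_singleton, isWeaklyRegular_append_iff,
      isWeaklyRegular_singleton_iff, isSMulRegular_quotient_iff_mem_of_smul_mem]
    refine ⟨ih hl, fun p hp => ?_⟩
    rw [smul_eq_mul, Ideal.mul_top, ofList_map_eq_span_image, mem_span_X_pow_image_iff] at hp ⊢
    intro s hs
    have hsm : Finsupp.single m (K m) + s ∈ ((X m ^ K m : MvPolynomial σ R) • p).support := by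
      rwa [mem_support_iff, smul_eq_mul, X_pow_eq_monomial, coeff_monomial_mul, one_mul,
        ← mem_support_iff]
    obtain ⟨i, hi, hle⟩ := hp _ hsm
    have him : m ≠ i := (hm i hi m (List.mem_singleton_self m)).symm
    exact ⟨i, hi, by simpa [him] using hle⟩

end Monomials

section WeightedHomogeneous

lemma isWeightedHomogeneous_addMonoidHom_comp {R σ A B : Type*} [CommSemiring R]
    [AddCommMonoid A] [AddCommMonoid B] (φ : A →+ B) {w : σ → A} {m : A} {p : MvPolynomial σ R}
    (hp : p.IsWeightedHomogeneous w m) :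
    p.IsWeightedHomogeneous (φ ∘ w) (φ m) := by
  intro s hs
  rw [← hp hs]
  simp [Finsupp.weight_apply, Finsupp.sum]

variable {R σ G : Type*} [CommRing R] [AddCommGroup G]

lemma isWeightedHomogeneous_det {ι : Type*} [Fintype ι] [DecidableEq ι] {w : σ → G}
    {A : Matrix ι ι (MvPolynomial σ R)} {a b : ι → G}
    (hA : ∀ i j, (A i j).IsWeightedHomogeneous w (a i - b j)) :
    A.det.IsWeightedHomogeneous w (∑ i, a i - ∑ j, b j) := by
  rw [Matrix.det_apply, ← mem_weightedHomogeneousSubmodule]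
  refine sum_mem fun τ _ => ?_
  rw [Units.smul_def]
  refine zsmul_mem ?_ _
  rw [← Equiv.sum_comp τ a, ← Finset.sum_sub_distrib]
  exact .prod _ _ _ fun i _ => hA (τ i) i

lemma exists_isWeightedHomogeneous_sum_mul_eq {ι : Type*} [Fintype ι] {w : σ → G} {m : G}
    {f : ι → MvPolynomial σ R} {e : ι → G} (hf : ∀ j, (f j).IsWeightedHomogeneous w (e j))
    {p : MvPolynomial σ R} (hp : p.IsWeightedHomogeneous w m)
    (hpf : p ∈ Ideal.span (Set.range f)) :
    ∃ c : ι → MvPolynomial σ R,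
      (∀ j, (c j).IsWeightedHomogeneous w (m - e j)) ∧ ∑ j, c j * f j = p := by
  classical
  obtain ⟨b, rfl⟩ := Ideal.mem_span_range_iff_exists_fun.mp hpf
  let 𝒜 := weightedHomogeneousSubmodule R w
  let : GradedAlgebra 𝒜 := weightedGradedAlgebra R w
  refine ⟨fun j => DirectSum.decompose 𝒜 (b j) (m - e j),
    fun j => (DirectSum.decompose 𝒜 (b j) (m - e j)).2, ?_⟩
  calc ∑ j, (DirectSum.decompose 𝒜 (b j) (m - e j) : MvPolynomial σ R) * f j
      = ∑ j, (DirectSum.decompose 𝒜 (b j * f j) m : MvPolynomial σ R) := by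
        refine Finset.sum_congr rfl fun j _ => ?_
        rw [← DirectSum.coe_decompose_mul_add_of_right_mem 𝒜 (hf j), sub_add_cancel]
    _ = DirectSum.decompose 𝒜 (∑ j, b j * f j) m := by
        rw [DirectSum.decompose_sum, DFinsupp.finsetSum_apply, AddSubmonoidClass.coe_finsetSum]
    _ = ∑ j, b j * f j := DirectSum.decompose_of_mem_same 𝒜 hp

variable [PartialOrder G] [IsOrderedAddMonoid G]

lemma mem_span_X_pow_of_sum_smul_sub_lt [Fintype σ] {w : σ → G} (hw : 0 ≤ w) {K : σ → ℕ} {m : G}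
    {p : MvPolynomial σ R} (hp : p.IsWeightedHomogeneous w m)
    (hm : ∑ i, K i • w i - ∑ i, w i < m) :
    p ∈ Ideal.span (Set.range fun i => (X i ^ K i : MvPolynomial σ R)) := by
  rw [← Set.image_univ, mem_span_X_pow_image_iff]
  by_contra! h
  obtain ⟨s, hs, hsK⟩ := h
  refine (sub_lt_iff_lt_add.mp hm).not_ge ?_
  calc m + ∑ i, w i = ∑ i, (s i + 1) • w i := by
        simp only [← hp (mem_support_iff.mp hs), Finsupp.weight_eq_sum, add_smul, one_smul,
          Finset.sum_add_distrib]
    _ ≤ ∑ i, K i • w i :=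
        Finset.sum_le_sum fun i _ => nsmul_le_nsmul_left (hw i) (hsK i (Set.mem_univ i))

theorem mem_span_of_isWeightedHomogeneous_of_sum_sub_lt {n : ℕ} {w : Fin n → G} (hw : 0 ≤ w)
    {f : Fin n → MvPolynomial (Fin n) R} {e : Fin n → G}
    (hf : ∀ j, (f j).IsWeightedHomogeneous w (e j))
    (hrad : ∀ i, X i ∈ (Ideal.span (Set.range f)).radical)
    {p : MvPolynomial (Fin n) R} {m : G} (hp : p.IsWeightedHomogeneous w m)
    (hm : ∑ j, e j - ∑ i, w i < m) :
    p ∈ Ideal.span (Set.range f) := by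
  choose K hK using hrad
  choose C hC hCf using fun i => exists_isWeightedHomogeneous_sum_mul_eq hf
    ((isWeightedHomogeneous_X R w i).pow (K i)) (hK i)
  have hmulVec : List.ofFn ((Matrix.of C).mulVec f) =
      (List.finRange n).map fun i => X i ^ K i := by
    rw [List.ofFn_eq_map]
    exact congrArg (List.map · _) (funext hCf)
  refine mem_span_of_mul_det_mem_ofList (Matrix.of C) f ?_ ?_
  · rw [hmulVec]
    exact isWeaklyRegular_map_X_pow K (List.nodup_finRange n)
  · have hdeg := hp.mul (isWeightedHomogeneous_det (A := Matrix.of C) hC)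
    have hmem := mem_span_X_pow_of_sum_smul_sub_lt (K := K) hw hdeg <|
      calc ∑ i, K i • w i - ∑ i, w i
          = (∑ j, e j - ∑ i, w i) + (∑ i, K i • w i - ∑ j, e j) := by abel
        _ < m + (∑ i, K i • w i - ∑ j, e j) := by gcongr
    rw [hmulVec, ofList_map_eq_span_image]
    simpa using hmem

end WeightedHomogeneous

section AlgClosed

variable {k : Type*} [Field k] [IsAlgClosed k]

lemma X_mem_radical_span_of_eval_eq_zero {σ ι : Type*} [Finite σ] {f : ι → MvPolynomial σ k}
    (hf : ∀ x : σ → k, (∀ j, eval x (f j) = 0) → x = 0) (i : σ) :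
    X i ∈ (Ideal.span (Set.range f)).radical := by
  rw [← vanishingIdeal_zeroLocus_eq_radical (K := k), mem_vanishingIdeal_iff]
  intro x hx
  have hx0 : x = 0 := hf x fun j => by
    simpa [aeval_eq_eval] using hx (f j) (Ideal.subset_span ⟨j, rfl⟩)
  simp [hx0]

theorem monomial_mem_span_pderiv {n : ℕ} (α : Fin n → ℕ) {d : ℕ} {g : MvPolynomial (Fin n) k}
    (hgh : g.IsWeightedHomogeneous α d)
    (htame : ∀ x : Fin n → k, (∀ i, eval x (pderiv i g) = 0) → x = 0)
    {β : Fin n →₀ ℕ} (hβ : n * d < ∑ i, (β i + 1) * α i + ∑ i, α i) :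
    monomial β (1 : k) ∈ Ideal.span (Set.range fun i => pderiv i g) := by
  let w : Fin n → ℤ := fun i => α i
  have hg : g.IsWeightedHomogeneous w d :=
    isWeightedHomogeneous_addMonoidHom_comp (Nat.castAddMonoidHom ℤ) hgh
  have hβw : (monomial β (1 : k)).IsWeightedHomogeneous w (∑ i, β i * α i : ℤ) :=
    isWeightedHomogeneous_monomial w β 1 (by simp [Finsupp.weight_eq_sum, w])
  refine mem_span_of_isWeightedHomogeneous_of_sum_sub_lt (fun i => Int.natCast_nonneg (α i))
    (fun j => hg.pderiv (sub_add_cancel _ _)) (X_mem_radical_span_of_eval_eq_zero htame) hβw ?_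
  zify at hβ
  simp only [add_mul, one_mul, Finset.sum_add_distrib, Finset.sum_sub_distrib, Finset.sum_const,
    Finset.card_univ, Fintype.card_fin, nsmul_eq_mul, w] at hβ ⊢
  linarith

theorem monomial_degree_bound_of_not_mem_jacobian_general {n : ℕ} {α : Fin n → ℕ} (hα : α ≠ 0)
    {d : ℕ} {g : MvPolynomial (Fin n) k} (hgh : g.IsWeightedHomogeneous α d)
    (htame : ∀ x : Fin n → k, (∀ i, eval x (pderiv i g) = 0) → x = 0)
    {β : Fin n →₀ ℕ}
    (hβ : monomial β (1 : k) ∉ Ideal.span (Set.range fun i => pderiv i g)) :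
    (∑ i, (β i + 1) * α i) + ∑ i, α i ≤ n * d ∧
    0 < (∑ i, ((β i : ℚ) + 1) * (α i : ℚ)) / d ∧
    (∑ i, ((β i : ℚ) + 1) * (α i : ℚ)) / d < n := by
  have hbound : (∑ i, (β i + 1) * α i) + ∑ i, α i ≤ n * d :=
    not_lt.mp (mt (monomial_mem_span_pderiv α hgh htame) hβ)
  have hαsum : 0 < ∑ i, α i := Fintype.sum_pos (pos_iff_ne_zero.mpr hα)
  have hle : ∑ i, α i ≤ ∑ i, (β i + 1) * α i :=
    Finset.sum_le_sum fun i _ => Nat.le_mul_of_pos_left _ (Nat.succ_pos _)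
  have hd : 0 < d := Nat.pos_of_mul_pos_left (by omega : 0 < n * d)
  have hcast : ∑ i, ((β i : ℚ) + 1) * (α i : ℚ) = (∑ i, (β i + 1) * α i : ℕ) := by push_cast; rfl
  rw [hcast]
  refine ⟨hbound, div_pos (by exact_mod_cast hαsum.trans_le hle) (by exact_mod_cast hd), ?_⟩
  rw [div_lt_iff₀ (by exact_mod_cast hd)]
  exact_mod_cast (by omega : ∑ i, (β i + 1) * α i < n * d)

end AlgClosed

/-- Let `g` be quasi-homogeneous of degree `d` for the weights `α`, with
the origin as its only singularity.  Every monomial `x^β` whose class in the Milnor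
algebra `V_g` is nonzero (i.e. `x^β` is not in the Jacobian ideal of `g`) satisfies
`Σᵢ (βᵢ+1)αᵢ ≤ (n+1)·d - Σᵢ αᵢ`; in particular `A_β = Σᵢ (βᵢ+1)αᵢ/d` satisfies
`0 < A_β < n + 1`. -/
theorem monomial_degree_bound_of_not_mem_jacobian
    (n : ℕ) (hn : 1 ≤ n) (α : Fin (n + 1) → ℕ)
    (hαpos : ∀ i, 0 < α i) (hα : Finset.univ.gcd α = 1)
    (d : ℕ)
    (g : MvPolynomial (Fin (n + 1)) ℂ)
    (hgh : g.IsWeightedHomogeneous α d)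
    (hg0 : g ≠ 0)
    (htame : ∀ x : Fin (n + 1) → ℂ, (∀ i, eval x (pderiv i g) = 0) → x = 0)
    (β : Fin (n + 1) →₀ ℕ)
    (hβ : monomial β (1 : ℂ) ∉ Ideal.span (Set.range fun i => pderiv i g)) :
    (∑ i, (β i + 1) * α i) + ∑ i, α i ≤ (n + 1) * d ∧
    0 < (∑ i, ((β i : ℚ) + 1) * (α i : ℚ)) / d ∧
    (∑ i, ((β i : ℚ) + 1) * (α i : ℚ)) / d < (n : ℚ) + 1 := by
  exact_mod_cast monomial_degree_bound_of_not_mem_jacobian_general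
    (fun h => (hαpos 0).ne' (congrFun h 0)) hgh htame hβ
end

section
/- Let K := ℂ(t) be the field of rational functions, M a K-vector space, and ∇ : M → M an additive map satisfying the Leibniz rule ∇(p·m) = p·∇(m) + p′·m for every polynomial p ∈ ℂ[t] (viewed in K) and every m ∈ M, where p′ denotes the derivative of p. Fix a nonzero S ∈ ℂ[t] and for each integer k ≥ 0 define ∇_k : M → M by ∇_k(m) := S·∇(m) − k·S′·m. Then for every k ≥ 1 and every m ∈ M one has S^k·∇^k(m) = (∇_{k−1} ∘ ∇_{k−2} ∘ ⋯ ∘ ∇_0)(m), where ∇^k denotes the k-fold iterate of ∇. -/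
open Polynomial

/-!
Where `s` is invertible, the Leibniz rule says that `∇_k` is `s ^ (k + 1) ∘ ∇ ∘ s ^ (-k)`, so in
`∇_{k-1} ∘ ⋯ ∘ ∇_0` the intermediate powers of `s` cancel. Read as
`∇_k (s ^ k m) = s ^ (k + 1) ∇ m`, the same identity holds without inverting `s`.
-/

section LeibnizRule

variable {A R M : Type*} [CommSemiring A] [CommSemiring R] [Algebra A R]

theorem smul_derivation_pow [AddCommMonoid M] [Module R M] [Module A M]
    (d : Derivation A R M) (a : R) (n : ℕ) : a • d (a ^ n) = (n * a ^ n) • d a := by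
  cases n with
  | zero => simp
  | succ n =>
    rw [d.leibniz_pow, Nat.add_sub_cancel, smul_comm a, smul_smul, ← pow_succ',
      ← Nat.cast_smul_eq_nsmul R, smul_smul]

variable [AddCommGroup M] [Module R M]

/-- The operator `∇_k = s ∇ - k s'` for `s' = d s`, with `∇` an unbundled map written `nabla`;
its successive composites are the operators `s ^ k ∇ ^ k`. -/
def twistedConnection (d : Derivation A R R) (nabla : M → M) (s : R) (k : ℕ) (m : M) : M :=
  s • nabla m - (k * d s) • m

theorem twistedConnection_pow_smul {d : Derivation A R R} {nabla : M → M}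
    (leibniz : ∀ (a : R) (m : M), nabla (a • m) = a • nabla m + d a • m)
    (s : R) (k : ℕ) (m : M) :
    twistedConnection d nabla s k (s ^ k • m) = s ^ (k + 1) • nabla m := by
  have mul_derivation_pow : s * d (s ^ k) = k * d s * s ^ k := by
    simpa only [smul_eq_mul, mul_right_comm] using smul_derivation_pow d s k
  calc twistedConnection d nabla s k (s ^ k • m)
      = s • (s ^ k • nabla m + d (s ^ k) • m) - (k * d s) • s ^ k • m := by
        rw [twistedConnection, leibniz]
    _ = s ^ (k + 1) • nabla m + (s * d (s ^ k)) • m - (k * d s * s ^ k) • m := by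
        rw [smul_add, smul_smul, smul_smul, smul_smul, ← pow_succ']
    _ = s ^ (k + 1) • nabla m := by
        rw [mul_derivation_pow, add_sub_cancel_right]

theorem iterated_gauss_manin_formula_general {d : Derivation A R R} {nabla : M → M}
    (leibniz : ∀ (a : R) (m : M), nabla (a • m) = a • nabla m + d a • m)
    (s : R) {Φ : ℕ → M → M} (Φ_zero : ∀ m, Φ 0 m = m)
    (Φ_succ : ∀ k m, Φ (k + 1) m = twistedConnection d nabla s k (Φ k m)) (k : ℕ) (m : M) :
    s ^ k • nabla^[k] m = Φ k m := by
  induction k with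
  | zero => rw [pow_zero, one_smul, Function.iterate_zero_apply, Φ_zero]
  | succ k ih =>
    rw [Φ_succ, ← ih, twistedConnection_pow_smul leibniz, Function.iterate_succ_apply']

end LeibnizRule

/-- Let `K = ℂ(t)`, `M` a `K`-vector space and `∇ : M → M` an additive map
satisfying the Leibniz rule `∇(p·m) = p·∇(m) + p′·m` for polynomials `p ∈ ℂ[t]`.  Fix
`S ∈ ℂ[t]`, `S ≠ 0`, and set `∇_k(m) = S·∇(m) - k·S′·m`.  Then for every `k ≥ 1`,
`S^k·∇^k(m) = (∇_{k-1} ∘ ⋯ ∘ ∇_0)(m)`. -/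
theorem iterated_gauss_manin_formula
    (M : Type*) [AddCommGroup M] [Module (RatFunc ℂ) M]
    (gm : M → M)
    (hadd : ∀ m m' : M, gm (m + m') = gm m + gm m')
    (hleib : ∀ (p : Polynomial ℂ) (m : M),
      gm ((algebraMap (Polynomial ℂ) (RatFunc ℂ) p) • m) =
        (algebraMap (Polynomial ℂ) (RatFunc ℂ) p) • gm m +
        (algebraMap (Polynomial ℂ) (RatFunc ℂ) (derivative p)) • m)
    (S : Polynomial ℂ) (hS : S ≠ 0)
    (D : ℕ → M → M)
    (hD : ∀ (k : ℕ) (m : M), D k m =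
      (algebraMap (Polynomial ℂ) (RatFunc ℂ) S) • gm m -
        (algebraMap (Polynomial ℂ) (RatFunc ℂ)
          ((k : Polynomial ℂ) * derivative S)) • m)
    (Φ : ℕ → M → M)
    (hΦ0 : ∀ m, Φ 0 m = m)
    (hΦsucc : ∀ (k : ℕ) (m : M), Φ (k + 1) m = D k (Φ k m)) :
    ∀ k : ℕ, 1 ≤ k → ∀ m : M,
      (algebraMap (Polynomial ℂ) (RatFunc ℂ) (S ^ k)) • (gm^[k] m) = Φ k m := by
  let : Module ℂ[X] M := Module.compHom M (algebraMap ℂ[X] (RatFunc ℂ))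
  exact fun k _ m => iterated_gauss_manin_formula_general (d := derivative') hleib S hΦ0
    (fun k m => (hΦsucc k m).trans (hD k (Φ k m))) k m
end
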